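/- Every correlated equilibrium collection {F_c} of a Bayesian game G yields optimizer expected value E_{c∼D} E_{(i,j)∼F_c}[u_O(i,j,c)] at most PerConVal(G) = Σ_c p_c Val(G_c), where Val(G_c) is the Stackelberg value of the context-c standard game; i.e., CorrVal(G) ≤ PerConVal(G). [This uses that the Stackelberg value of a standard game is at least the optimizer's utility in any correlated equilibrium of that game.] -/

import Mathlib

open Finset

theorem stmt14 (M N C : ℕ)
    (p : Fin C → ℝ) (hp0 : ∀ c, 0 ≤ p c) (hp1 : ∑ c, p c = 1)
    (uO uL : Fin M → Fin N → Fin C → ℝ)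
    (F : Fin C → Fin M × Fin N → ℝ)
    (hF0 : ∀ c q, 0 ≤ F c q) (hF1 : ∀ c, ∑ q, F c q = 1)
    (hCE1 : ∀ c c', ∑ q : Fin M × Fin N, F c' q * uL q.1 q.2 c
      ≤ ∑ q : Fin M × Fin N, F c q * uL q.1 q.2 c)
    (hCE2 : ∀ c, ∀ π : Fin N → Fin N,
      ∑ q : Fin M × Fin N, F c q * uL q.1 (π q.2) c
        ≤ ∑ q : Fin M × Fin N, F c q * uL q.1 q.2 c)
    (Val : Fin C → ℝ)
    (hVal : ∀ c, IsGreatest {z | ∃ α : Fin M → ℝ,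
      (∀ i, 0 ≤ α i) ∧ (∑ i, α i = 1) ∧
      ∃ j : Fin N, (∀ j', ∑ i, α i * uL i j' c ≤ ∑ i, α i * uL i j c) ∧
        z = ∑ i, α i * uO i j c} (Val c)) :
    ∑ c, p c * ∑ q : Fin M × Fin N, F c q * uO q.1 q.2 c
      ≤ ∑ c, p c * Val c := by
  apply Finset.sum_le_sum
  intro c _
  apply mul_le_mul_of_nonneg_left _ (hp0 c)
  have hcol : ∀ j j', ∑ i, F c (i, j) * uL i j' c ≤ ∑ i, F c (i, j) * uL i j c := by
    intro j j'
    have h := hCE2 c (Function.update id j j')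
    rw [Fintype.sum_prod_type_right, Fintype.sum_prod_type_right,
      ← Finset.add_sum_erase _ _ (Finset.mem_univ j),
      ← Finset.add_sum_erase _ (fun y => ∑ x, F c (x, y) * uL (x, y).1 (x, y).2 c)
        (Finset.mem_univ j)] at h
    have e : ∑ y ∈ Finset.univ.erase j,
          ∑ x, F c (x, y) * uL (x, y).1 (Function.update id j j' (x, y).2) c
        = ∑ y ∈ Finset.univ.erase j, ∑ x, F c (x, y) * uL (x, y).1 (x, y).2 c := by
      apply Finset.sum_congr rfl
      intro y hy
      simp [Function.update_of_ne (Finset.ne_of_mem_erase hy)]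
    rw [e] at h
    have h2 := le_of_add_le_add_right h
    simpa using h2
  have hw : ∀ j, ∑ i, F c (i, j) * uO i j c ≤ (∑ i, F c (i, j)) * Val c := by
    intro j
    have hw0 : 0 ≤ ∑ i, F c (i, j) := Finset.sum_nonneg fun i _ => hF0 c (i, j)
    rcases hw0.eq_or_lt with h0 | hpos
    · have hz := (Finset.sum_eq_zero_iff_of_nonneg (fun i _ => hF0 c (i, j))).1 h0.symm
      rw [← h0, zero_mul]
      apply le_of_eq
      apply Finset.sum_eq_zero
      intro i hi
      rw [hz i hi, zero_mul]
    · have key : ∀ f : Fin M → ℝ, ∑ i, F c (i, j) / (∑ i, F c (i, j)) * f i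
          = (∑ i, F c (i, j) * f i) / ∑ i, F c (i, j) := by
        intro f
        rw [Finset.sum_div]
        exact Finset.sum_congr rfl fun i _ => by ring
      have := (hVal c).2 ⟨fun i => F c (i, j) / ∑ i, F c (i, j),
        fun i => div_nonneg (hF0 c _) hw0,
        by rw [← Finset.sum_div]; exact div_self hpos.ne', j, fun j' => by
          rw [key (fun i => uL i j' c), key (fun i => uL i j c)]
          exact div_le_div_of_nonneg_right (hcol j j') hw0, rfl⟩
      rw [key (fun i => uO i j c), div_le_iff₀ hpos] at this
      linarith
  calc ∑ q : Fin M × Fin N, F c q * uO q.1 q.2 c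
      = ∑ j, ∑ i, F c (i, j) * uO i j c := Fintype.sum_prod_type_right _
    _ ≤ ∑ j, (∑ i, F c (i, j)) * Val c := Finset.sum_le_sum fun j _ => hw j
    _ = Val c := by
      rw [← Finset.sum_mul, ← Fintype.sum_prod_type_right (fun q => F c q), hF1, one_mul]
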